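/- arXiv:2203.12492 — 2 statements merged into one kernel-verified Lean document; each statement's English description precedes it below -/
import Mathlib

section
/- For all integers d ≥ 1 and r ≥ 0, the signed permutation w^{(d,r)} ∈ W(B_{d+r}) pattern avoids each of the following signed permutations (given in one-line notation as sequences of signed integers): (−3, 2, −1), (−3, 2, 1), (3, 2, −1), (3, 2, 1), (3, −1, 2), (−2, 3, 1), (−1, 3, 2), (−4, −1, −2, 3), (−4, 1, −2, 3), (−3, −4, −1, −2), (3, −4, −1, −2), (3, −4, 1, −2), (3, 1, 4, 2), (−2, −3, 4, −1), (2, 4, 1, 3), (2, −3, 4, −1), (2, 1, 4, 3). -/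
open scoped BigOperators

namespace BST

/-- `lam` (1-indexed, with `d` parts) is a strict partition: strictly decreasing
positive parts `lam 1 > lam 2 > ⋯ > lam d > 0`. -/
def IsStrictPartition (d : ℕ) (lam : ℕ → ℕ) : Prop :=
  (∀ i : ℕ, 1 ≤ i → i < d → lam (i + 1) < lam i) ∧ 1 ≤ lam d

/-- The size `|λ| = λ_1 + ⋯ + λ_d`. -/
def sizeP (d : ℕ) (lam : ℕ → ℕ) : ℕ := ∑ i ∈ Finset.Icc 1 d, lam i

/-- The shifted diagram `D(λ) ⊆ ℤ × ℤ`: row `i` (1 ≤ i ≤ d) occupies columns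
`i - d, …, λ_i + i - d - 1`. -/
def Diagram (d : ℕ) (lam : ℕ → ℕ) : Set (ℤ × ℤ) :=
  {p : ℤ × ℤ | 1 ≤ p.1 ∧ p.1 ≤ (d : ℤ) ∧ p.1 - (d : ℤ) ≤ p.2 ∧
    p.2 + (d : ℤ) + 1 ≤ (lam p.1.toNat : ℤ) + p.1}

/-- The hook `H(i,c)`. -/
def Hook (d : ℕ) (lam : ℕ → ℕ) (i c : ℤ) : Set (ℤ × ℤ) :=
  {(i, c)} ∪ {p ∈ Diagram d lam | (p.1 = i ∧ c < p.2) ∨ (p.2 = c ∧ i < p.1)} ∪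
    {p ∈ Diagram d lam | c < 0 ∧ p.1 = (d : ℤ) + 1 + c}

/-- The extended hook `H̃(i,c)`. -/
def ExtHook (d : ℕ) (lam : ℕ → ℕ) (i c : ℤ) : Set (ℤ × ℤ) :=
  Hook d lam i c ∪ {p : ℤ × ℤ | c < 0 ∧ p = ((d : ℤ) + 1 + c, c)}

/-- The extended diagram `D(λ) ∪ {(i, i - d - 1) : 1 ≤ i ≤ d}`. -/
def ExtDiagram (d : ℕ) (lam : ℕ → ℕ) : Set (ℤ × ℤ) :=
  Diagram d lam ∪ {p : ℤ × ℤ | 1 ≤ p.1 ∧ p.1 ≤ (d : ℤ) ∧ p.2 = p.1 - ((d : ℤ) + 1)}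

/-- The extended filling `B̃`, with `B̃(i, i - d - 1) = B(i, 0)`. -/
def ExtFilling (d : ℕ) (B : ℤ × ℤ → ℕ) : ℤ × ℤ → ℕ :=
  fun p => if p.2 = p.1 - ((d : ℤ) + 1) then B (p.1, 0) else B p

/-- The rank function `rk(i,c)`. -/
def rk (d : ℕ) (lam : ℕ → ℕ) (i c : ℤ) : ℤ :=
  if 0 ≤ c then (lam i.toNat : ℤ) - d + i - c
  else (lam i.toNat : ℤ) - d + i + (lam ((d : ℤ) + 1 + c).toNat : ℤ) + c + 1

/-- A bijective filling of `D(λ)` with `1, …, |λ|` (normalized to be `0` off the diagram). -/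
def IsFilling (d : ℕ) (lam : ℕ → ℕ) (B : ℤ × ℤ → ℕ) : Prop :=
  Set.BijOn B (Diagram d lam) (Set.Icc 1 (sizeP d lam)) ∧
    ∀ p : ℤ × ℤ, p ∉ Diagram d lam → B p = 0

/-- A balanced shifted tableau: a bijective filling such that at each box `(i,c)`,
`B(i,c)` is the `rk(i,c)`-th largest entry of the multiset of values of `B̃` on the
extended hook, i.e. exactly `rk(i,c) - 1` boxes of the extended hook carry a value
strictly larger than `B(i,c)`. -/
def IsBalanced (d : ℕ) (lam : ℕ → ℕ) (B : ℤ × ℤ → ℕ) : Prop :=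
  IsFilling d lam B ∧ ∀ p ∈ Diagram d lam,
    ({q ∈ ExtHook d lam p.1 p.2 | B p < ExtFilling d B q}.ncard : ℤ) =
      rk d lam p.1 p.2 - 1

/-- A standard Young tableau of shifted shape `λ`. -/
def IsSYT (d : ℕ) (lam : ℕ → ℕ) (B : ℤ × ℤ → ℕ) : Prop :=
  IsFilling d lam B ∧ ∀ p ∈ Diagram d lam, ∀ q ∈ Diagram d lam,
    ((p.1 = q.1 ∧ p.2 < q.2) → B p < B q) ∧ ((p.2 = q.2 ∧ p.1 < q.1) → B p < B q)

/-- The simple reflections of `W(B_n)`, acting on `ℤ`: `s 0` swaps `1 ↔ -1`,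
and `s a` (for `a ≥ 1`) swaps `a ↔ a+1` and `-a ↔ -(a+1)`. -/
def sB (a : ℕ) : Equiv.Perm ℤ :=
  if a = 0 then Equiv.swap 1 (-1)
  else Equiv.swap (a : ℤ) ((a : ℤ) + 1) * Equiv.swap (-(a : ℤ)) (-(a : ℤ) - 1)

/-- The product `s_{a_1} s_{a_2} ⋯ s_{a_m}` of a word. -/
def wordProd (L : List ℕ) : Equiv.Perm ℤ := (L.map sB).prod

/-- A signed permutation in `W(B_n)`: odd, and the identity beyond `n`. -/
def IsSignedPerm (n : ℕ) (w : Equiv.Perm ℤ) : Prop :=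
  (∀ i : ℤ, w (-i) = -(w i)) ∧ ∀ i : ℤ, (n : ℤ) < |i| → w i = i

/-- The Coxeter length of `w` in `W(B_n)`. -/
noncomputable def lengthB (n : ℕ) (w : Equiv.Perm ℤ) : ℕ :=
  sInf {m : ℕ | ∃ L : List ℕ, (∀ a ∈ L, a < n) ∧ wordProd L = w ∧ L.length = m}

/-- `L` is a reduced word of `w` in `W(B_n)`. -/
def IsReducedWord (n : ℕ) (w : Equiv.Perm ℤ) (L : List ℕ) : Prop :=
  (∀ a ∈ L, a < n) ∧ wordProd L = w ∧ L.length = lengthB n w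

/-- The vector `e_k` (for `k ≥ 1` the `k`-th standard basis vector, with the
conventions `e 0 = 0` and `e (-k) = - e k`), represented as an odd function `ℤ → ℤ`. -/
def eVec (k : ℤ) : ℤ → ℤ :=
  fun t => if t = 0 then 0 else if t = k then 1 else if t = -k then -1 else 0

/-- The positive roots of type `B_n`. -/
def PosRoots (n : ℕ) : Set (ℤ → ℤ) :=
  {v | (∃ i j : ℤ, 1 ≤ i ∧ i < j ∧ j ≤ (n : ℤ) ∧
        (v = eVec j - eVec i ∨ v = eVec j + eVec i)) ∨
       (∃ i : ℤ, 1 ≤ i ∧ i ≤ (n : ℤ) ∧ v = eVec i)}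

/-- The action of a signed permutation on vectors: `w · e_i = e_{w(i)}`. -/
def actB (w : Equiv.Perm ℤ) (v : ℤ → ℤ) : ℤ → ℤ := fun t => v (w⁻¹ t)

/-- The inversion set `Inv(w) = {α ∈ Φ⁺ : w⁻¹ · α ∈ -Φ⁺}`. -/
def InvSet (n : ℕ) (w : Equiv.Perm ℤ) : Set (ℤ → ℤ) :=
  {α | α ∈ PosRoots n ∧ -(actB w⁻¹ α) ∈ PosRoots n}

/-- The simple roots: `α_0 = e_1` and `α_a = e_{a+1} - e_a` for `a ≥ 1`. -/
def alphaRoot (a : ℕ) : ℤ → ℤ :=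
  if a = 0 then eVec 1 else eVec ((a : ℤ) + 1) - eVec (a : ℤ)

/-- The reflection order of a word: `reflOrder L t = γ_{t+1} = s_{a_1} ⋯ s_{a_t} · α_{a_{t+1}}`
(0-indexed). -/
def reflOrder (L : List ℕ) (t : ℕ) : ℤ → ℤ :=
  actB (wordProd (L.take t)) (alphaRoot (L.getD t 0))

/-- The trapezoid `Z(d,r) = (r+2d-1, r+2d-3, …, r+1)`. -/
def Zlam (d r : ℕ) : ℕ → ℕ := fun i => r + 2 * d + 1 - 2 * i

/-- The labeling `f : D(Z(d,r)) → Φ⁺`. -/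
def fLabel (d r : ℕ) (p : ℤ × ℤ) : ℤ → ℤ :=
  if p.2 ≤ 0 then eVec ((d : ℤ) + 1 - p.1) - eVec p.2
  else if p.2 ≤ (r : ℤ) then eVec ((d : ℤ) + 1 - p.1) + eVec (p.2 + (d : ℤ))
  else eVec ((d : ℤ) + 1 - p.1) - eVec (p.2 - (r : ℤ))

/-- The extended labeling `f̃`, with `f̃(i, i - d - 1) = 2 e_{d+1-i}`. -/
def fExtLabel (d r : ℕ) (p : ℤ × ℤ) : ℤ → ℤ :=
  if p.2 = p.1 - ((d : ℤ) + 1) then (2 : ℤ) • eVec ((d : ℤ) + 1 - p.1)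
  else fLabel d r p

/-- `w` is the signed permutation `w^{(d,r)} ∈ W(B_{d+r})`, i.e.
`w(i) = d + i` for `1 ≤ i ≤ r` and `w(i) = -(i - r)` for `r < i ≤ d + r`. -/
def IsWdr (d r : ℕ) (w : Equiv.Perm ℤ) : Prop :=
  IsSignedPerm (d + r) w ∧
    (∀ i : ℤ, 1 ≤ i → i ≤ (r : ℤ) → w i = (d : ℤ) + i) ∧
    (∀ i : ℤ, (r : ℤ) < i → i ≤ (d : ℤ) + (r : ℤ) → w i = -(i - r))


/-- `x` lies strictly between `y` and `z` (i.e. `min(y,z) < x < max(y,z)`). -/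
def Between (x y z : ℕ) : Prop := (y < x ∧ x < z) ∨ (z < x ∧ x < y)

/-- A nonempty list is unimodal: strictly decreasing down to its minimum
(at 0-indexed position `k`), then strictly increasing. -/
def Unimodal (L : List ℕ) : Prop :=
  ∃ k : ℕ, k < L.length ∧
    (∀ a b : ℕ, a < b → b ≤ k → L.getD b 0 < L.getD a 0) ∧
    (∀ a b : ℕ, k ≤ a → a < b → b < L.length → L.getD a 0 < L.getD b 0)

/-- Row `i` of the distinguished tableau of shape `Z(d,r)`:
`(r+d-i, …, r+1, 0, 1, …, r+d-i)`. -/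
def rowWord (d r i : ℕ) : List ℕ :=
  (List.range (r + 2 * (d - i) + 1)).map fun t =>
    if t < d - i then r + (d - i) - t else t - (d - i)

/-- The reading word `π(T) = T_d T_{d-1} ⋯ T_1` of the distinguished tableau of
shape `Z(d,r)`. -/
def piWord (d r : ℕ) : List ℕ :=
  (List.range d).flatMap fun k => rowWord d r (d - k)

/-- `μ_i = Z(d,r)_i - λ_i`. -/
def muF (d r : ℕ) (lam : ℕ → ℕ) (i : ℕ) : ℕ := r + 2 * d + 1 - 2 * i - lam i

/-- `σ_i = μ_1 + ⋯ + μ_i`. -/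
def sigmaF (d r : ℕ) (lam : ℕ → ℕ) (i : ℕ) : ℕ := ∑ t ∈ Finset.Icc 1 i, muF d r lam t

/-- `ν_i = min{μ_i, …, μ_d}`. -/
noncomputable def nuF (d r : ℕ) (lam : ℕ → ℕ) (i : ℕ) : ℕ :=
  sInf {m : ℕ | ∃ j : ℕ, i ≤ j ∧ j ≤ d ∧ m = muF d r lam j}

/-- The word `a^λ`: the concatenation over `i = 1, …, d` of the increasing runs
`(d+r-i-μ_i+1, …, d+r-i)`. -/
def aLamWord (d r : ℕ) (lam : ℕ → ℕ) : List ℕ :=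
  (List.range d).flatMap fun k =>
    (List.range (muF d r lam (k + 1))).map fun t =>
      d + r - (k + 1) - muF d r lam (k + 1) + 1 + t

/-- Row `i` of the tableau `P(w^λ)`: entries `P(i,c) = c` for `c ≥ 0` and
`P(i,c) = r - c - ν_{d+1+c}` for `c < 0`. -/
noncomputable def rowWordP (d r : ℕ) (lam : ℕ → ℕ) (i : ℕ) : List ℕ :=
  (List.range (lam i)).map fun t =>
    if t < d - i then r + (d - i) - t - nuF d r lam (i + 1 + t) else t - (d - i)

/-- The reading word `π(P(w^λ))`. -/
noncomputable def piWordP (d r : ℕ) (lam : ℕ → ℕ) : List ℕ :=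
  (List.range d).flatMap fun k => rowWordP d r lam (d - k)

/-- The shape obtained from `λ` by adding one box at the end of row `i`. -/
def stepShape (lam : ℕ → ℕ) (i : ℕ) : ℕ → ℕ :=
  fun t => if t = i then lam i + 1 else lam t

/-- The box-adding map `f_i` on fillings: swap columns `j = λ_i + i - d` and `j + 1`
(in rows `1, …, i-1`), and put the value `N + 1` in the new box `(i, j)`. -/
def addBox (d : ℕ) (lam : ℕ → ℕ) (i : ℕ) (N : ℕ) (B : ℤ × ℤ → ℕ) : ℤ × ℤ → ℕ :=
  fun p =>
    if p = ((i : ℤ), (lam i : ℤ) + (i : ℤ) - (d : ℤ)) then N + 1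
    else if 1 ≤ p.1 ∧ p.1 < (i : ℤ) ∧ p.2 = (lam i : ℤ) + (i : ℤ) - (d : ℤ) then
      B (p.1, p.2 + 1)
    else if 1 ≤ p.1 ∧ p.1 < (i : ℤ) ∧ p.2 = (lam i : ℤ) + (i : ℤ) - (d : ℤ) + 1 then
      B (p.1, p.2 - 1)
    else B p

/-- Successively apply the box-adding maps along a list of row indices,
tracking the current shape. -/
def FmapAux (d : ℕ) : List ℕ → (ℕ → ℕ) → (ℤ × ℤ → ℕ) → (ℤ × ℤ → ℕ)
  | [], _, B => B
  | i :: rest, lam, B => FmapAux d rest (stepShape lam i) (addBox d lam i (sizeP d lam) B)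

/-- The shape after successively adding boxes along a list of row indices. -/
def shapeAux : List ℕ → (ℕ → ℕ) → (ℕ → ℕ)
  | [], lam => lam
  | i :: rest, lam => shapeAux rest (stepShape lam i)

/-- The list of row indices `1^{μ_1} 2^{μ_2} ⋯ d^{μ_d}` used to pad `λ` to `Z(d,r)`. -/
def rowsList (d r : ℕ) (lam : ℕ → ℕ) : List ℕ :=
  (List.range d).flatMap fun k => List.replicate (muF d r lam (k + 1)) (k + 1)

/-- `BS(Z(d,r))|_λ`: balanced tableaux of shape `Z(d,r)` such that for each
`i ∈ {1,…,d}` the entries `N + σ_{i-1} + 1, …, N + σ_i` all occur in row `i`. -/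
def BSRestricted (d r : ℕ) (lam : ℕ → ℕ) : Set (ℤ × ℤ → ℕ) :=
  {T | IsBalanced d (Zlam d r) T ∧ ∀ i : ℕ, 1 ≤ i → i ≤ d →
    ∀ k : ℕ, sizeP d lam + sigmaF d r lam (i - 1) + 1 ≤ k →
      k ≤ sizeP d lam + sigmaF d r lam i →
      ∃ c : ℤ, ((i : ℤ), c) ∈ Diagram d (Zlam d r) ∧ T ((i : ℤ), c) = k}

/-- `w ∈ W(B_n)` pattern embeds the signed pattern `v` (given as its one-line
notation, a list of nonzero integers). -/
def PatternEmbeds (n : ℕ) (w : Equiv.Perm ℤ) (v : List ℤ) : Prop :=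
  ∃ idx : Fin v.length → ℤ, StrictMono idx ∧
    (∀ j, 1 ≤ idx j ∧ idx j ≤ (n : ℤ)) ∧
    (∀ j, 0 < w (idx j) ↔ 0 < v.get j) ∧
    (∀ j k, |w (idx j)| < |w (idx k)| ↔ |v.get j| < |v.get k|)


/-!
Order the nonzero integers by `1 ≺ 2 ≺ 3 ≺ ⋯ ≺ -1 ≺ -2 ≺ -3 ≺ ⋯`. Whether `x ≺ y` depends only on
the signs of `x`, `y` and on how `|x|`, `|y|` compare, which is exactly what a pattern embedding
preserves, so every pattern of a `≺`-increasing signed permutation is `≺`-increasing. The one-line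
notation of `w^{(d,r)}` is `≺`-increasing, while each of the seventeen patterns has a `≺`-descent
between two consecutive entries: a negative entry before a positive one, or two entries of equal
sign with decreasing absolute values.
-/

/-- The sort key of the order `1 ≺ 2 ≺ 3 ≺ ⋯ ≺ -1 ≺ -2 ≺ -3 ≺ ⋯` on nonzero integers: `x ≺ y` is
encoded as `signKey x < signKey y`, where `Bool` is ordered by `false < true`. The value `0`, which
is not an entry of a signed permutation, is placed just before `-1`. -/
def signKey (x : ℤ) : Bool ×ₗ ℤ := toLex (decide (x ≤ 0), |x|)

theorem signKey_lt_signKey {a b : ℤ} :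
    signKey a < signKey b ↔ (0 < a ∧ b ≤ 0) ∨ ((0 < a ↔ 0 < b) ∧ |a| < |b|) := by
  simp only [signKey, Prod.Lex.toLex_lt_toLex, Bool.lt_iff, decide_eq_false_iff_not,
    decide_eq_true_eq, decide_eq_decide, ← not_lt, not_iff_not, not_not]

theorem signKey_lt_signKey_congr {a b a' b' : ℤ} (ha : 0 < a ↔ 0 < a') (hb : 0 < b ↔ 0 < b')
    (hab : |a| < |b| ↔ |a'| < |b'|) : signKey a < signKey b ↔ signKey a' < signKey b' := by
  simp only [signKey_lt_signKey, ← not_lt, ha, hb, hab]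

theorem PatternEmbeds.strictMono_signKey {n : ℕ} {w : Equiv.Perm ℤ} {v : List ℤ}
    (h : PatternEmbeds n w v) (hw : StrictMonoOn (signKey ∘ w) (Set.Icc 1 n)) :
    StrictMono (signKey ∘ v.get) := by
  obtain ⟨idx, idx_strictMono, idx_mem, sign_iff, abs_lt_iff⟩ := h
  intro j k hjk
  have key_lt : signKey (w (idx j)) < signKey (w (idx k)) :=
    hw (idx_mem j) (idx_mem k) (idx_strictMono hjk)
  exact (signKey_lt_signKey_congr (sign_iff j) (sign_iff k) (abs_lt_iff j k)).1 key_lt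

theorem IsWdr.strictMonoOn_signKey {d r : ℕ} {w : Equiv.Perm ℤ} (hw : IsWdr d r w) :
    StrictMonoOn (signKey ∘ w) (Set.Icc 1 ((d + r : ℕ) : ℤ)) := by
  obtain ⟨-, w_of_le, w_of_gt⟩ := hw
  rintro i ⟨hi, hi'⟩ j ⟨hj, hj'⟩ hij
  push_cast at hi' hj'
  rw [Function.comp_apply, Function.comp_apply, signKey_lt_signKey]
  rcases le_or_gt i r with hir | hir <;> rcases le_or_gt j r with hjr | hjr
  · rw [w_of_le i hi hir, w_of_le j hj hjr]
    grind
  · rw [w_of_le i hi hir, w_of_gt j hjr hj']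
    grind
  · exact absurd (hij.trans_le hjr) hir.not_gt
  · rw [w_of_gt i hir hi', w_of_gt j hjr hj']
    grind

/-- The seventeen vexillary patterns that `w^{(d,r)}` is to avoid, each given by its one-line
notation as a list of nonzero integers. -/
def vexillaryPatterns : List (List ℤ) :=
  [[-3, 2, -1], [-3, 2, 1], [3, 2, -1], [3, 2, 1], [3, -1, 2],
    [-2, 3, 1], [-1, 3, 2], [-4, -1, -2, 3], [-4, 1, -2, 3],
    [-3, -4, -1, -2], [3, -4, -1, -2], [3, -4, 1, -2], [3, 1, 4, 2],
    [-2, -3, 4, -1], [2, 4, 1, 3], [2, -3, 4, -1], [2, 1, 4, 3]]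

theorem exists_signKey_descent_of_mem_vexillaryPatterns :
    ∀ v ∈ vexillaryPatterns, ∃ j k : Fin v.length,
      (j : ℕ) + 1 = k ∧ signKey (v.get k) < signKey (v.get j) := by
  decide

theorem not_strictMono_signKey_of_mem_vexillaryPatterns {v : List ℤ} (hv : v ∈ vexillaryPatterns) :
    ¬ StrictMono (signKey ∘ v.get) := by
  intro hmono
  obtain ⟨j, k, hjk, hdescent⟩ := exists_signKey_descent_of_mem_vexillaryPatterns v hv
  have hlt : j < k := Fin.lt_def.2 (by lia)
  exact (hmono hlt).asymm hdescent

theorem wdr_pattern_avoids_general {n : ℕ} {w : Equiv.Perm ℤ}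
    (hw : StrictMonoOn (signKey ∘ w) (Set.Icc 1 n)) :
    ∀ v ∈ vexillaryPatterns, ¬ PatternEmbeds n w v :=
  fun _ hv h => not_strictMono_signKey_of_mem_vexillaryPatterns hv (h.strictMono_signKey hw)

/-- `w^{(d,r)}` pattern avoids the seventeen vexillary patterns. -/
theorem wdr_pattern_avoids (d r : ℕ) (hd : 1 ≤ d)
    (w : Equiv.Perm ℤ) (hw : IsWdr d r w) :
    ∀ v ∈ ([[-3, 2, -1], [-3, 2, 1], [3, 2, -1], [3, 2, 1], [3, -1, 2],
            [-2, 3, 1], [-1, 3, 2], [-4, -1, -2, 3], [-4, 1, -2, 3],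
            [-3, -4, -1, -2], [3, -4, -1, -2], [3, -4, 1, -2], [3, 1, 4, 2],
            [-2, -3, 4, -1], [2, 4, 1, 3], [2, -3, 4, -1], [2, 1, 4, 3]] :
          List (List ℤ)),
      ¬ PatternEmbeds (d + r) w v :=
  wdr_pattern_avoids_general hw.strictMonoOn_signKey

end BST
end

section
/- Fix integers d ≥ 1, r ≥ 0 and a strict partition λ with d parts such that λ_i ≤ r + 2d − 2i + 1 for all i. Then the word a^λ = (c_1, …, c_{ℓ−N}) is a reduced word of the element (w^λ)^{−1} w^{(d,r)} = s_{c_1} s_{c_2} ⋯ s_{c_{ℓ−N}} ∈ W(B_{d+r}), and ℓ(w^λ) = |λ| = N. -/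
open scoped BigOperators

namespace BST

/-!
The length of `w ∈ W(B_n)` is the number of positive roots that `w` makes negative, because `s_a`
permutes the positive roots other than `α_a`. Read backwards, `a^λ` performs successive insertions
on `w^{(d,r)}`, whose values `-1, …, -d` at the positions `r + 1, …, r + d` are each smaller than
all values at earlier positive positions. Every letter therefore moves such a value to the left
past a larger one and destroys exactly one inversion. So the lengths of `w^λ` and of the word
`a^λ` add up to the length of `w^{(d,r)}`, which is `|Z(d,r)|`.
-/

/-- The lower end of the simple root `α_a`, which is `e_{a+1} - e_{lowEnd a}` for `a ≥ 1`. For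
`a = 0` the value `-1` makes this difference `2 e_1`, a multiple of `α_0`. -/
def lowEnd (a : ℕ) : ℤ := if a = 0 then -1 else a

lemma sB_apply (a : ℕ) (x : ℤ) :
    sB a x = if x = a + 1 then lowEnd a else if x = lowEnd a then (a : ℤ) + 1 else
      if x = -(a + 1) then -lowEnd a else if x = -lowEnd a then -((a : ℤ) + 1) else x := by
  rcases eq_or_ne a 0 with rfl | ha
  · simp only [sB, lowEnd, if_true, Equiv.swap_apply_def]
    split_ifs <;> omega
  · simp only [sB, lowEnd, if_neg ha, Equiv.Perm.mul_apply, Equiv.swap_apply_def]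
    split_ifs <;> omega

lemma sB_succ (a : ℕ) : sB a (a + 1) = lowEnd a := by
  rw [sB_apply, if_pos rfl]

lemma sB_sB (a : ℕ) (x : ℤ) : sB a (sB a x) = x := by
  simp only [sB_apply, lowEnd]
  split_ifs <;> omega

lemma sB_lowEnd (a : ℕ) : sB a (lowEnd a) = a + 1 := by
  rw [← sB_succ, sB_sB]

lemma sB_mul_self (a : ℕ) : sB a * sB a = 1 :=
  Equiv.ext (sB_sB a)

lemma odd_sB (a : ℕ) : Function.Odd (sB a) := fun x => by
  simp only [sB_apply, lowEnd]
  split_ifs <;> omega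

lemma lowEnd_lt_succ (a : ℕ) : lowEnd a < a + 1 := by
  unfold lowEnd
  split_ifs <;> omega

lemma IsSignedPerm.odd {n : ℕ} {w : Equiv.Perm ℤ} (hw : IsSignedPerm n w) : Function.Odd w :=
  hw.1

lemma IsSignedPerm.one (n : ℕ) : IsSignedPerm n 1 :=
  ⟨fun _ => rfl, fun _ _ => rfl⟩

lemma IsSignedPerm.mul {n : ℕ} {u v : Equiv.Perm ℤ} (hu : IsSignedPerm n u)
    (hv : IsSignedPerm n v) : IsSignedPerm n (u * v) :=
  ⟨fun i => by simp only [Equiv.Perm.mul_apply, hv.1, hu.1],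
    fun i hi => by rw [Equiv.Perm.mul_apply, hv.2 i hi, hu.2 i hi]⟩

lemma isSignedPerm_sB {n a : ℕ} (ha : a < n) : IsSignedPerm n (sB a) := by
  refine ⟨odd_sB a, fun i hi => ?_⟩
  rw [lt_abs] at hi
  simp only [sB_apply, lowEnd]
  split_ifs <;> omega

lemma IsSignedPerm.apply_of_lt {n : ℕ} {w : Equiv.Perm ℤ} (hw : IsSignedPerm n w) {i : ℤ}
    (hi : n < i) : w i = i :=
  hw.2 i (lt_abs.mpr (.inl hi))

lemma IsSignedPerm.apply_le {n : ℕ} {w : Equiv.Perm ℤ} (hw : IsSignedPerm n w) {i m : ℤ}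
    (hnm : n ≤ m) (him : i ≤ m) : w i ≤ m := by
  by_contra! h
  have hfix : w i = i := w.injective (hw.apply_of_lt (hnm.trans_lt h))
  omega

lemma wordProd_nil : wordProd [] = 1 := rfl

lemma wordProd_singleton (a : ℕ) : wordProd [a] = sB a :=
  List.prod_singleton

lemma wordProd_cons (a : ℕ) (L : List ℕ) : wordProd (a :: L) = sB a * wordProd L :=
  List.prod_cons

lemma wordProd_append (L M : List ℕ) : wordProd (L ++ M) = wordProd L * wordProd M := by
  simp only [wordProd, List.map_append, List.prod_append]

lemma wordProd_reverse (L : List ℕ) : wordProd L.reverse = (wordProd L)⁻¹ := by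
  induction L with
  | nil => rfl
  | cons a L ih =>
    rw [List.reverse_cons, wordProd_append, ih, wordProd_singleton, wordProd_cons, mul_inv_rev,
      inv_eq_of_mul_eq_one_left (sB_mul_self a)]

lemma odd_wordProd (L : List ℕ) : Function.Odd (wordProd L) := by
  induction L with
  | nil => exact fun _ => rfl
  | cons a L ih =>
    rw [wordProd_cons]
    exact (odd_sB a).comp_odd ih

lemma isSignedPerm_wordProd {n : ℕ} {L : List ℕ} (hL : ∀ a ∈ L, a < n) :
    IsSignedPerm n (wordProd L) := by
  induction L with
  | nil => exact .one n
  | cons a L ih =>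
    rw [List.forall_mem_cons] at hL
    rw [wordProd_cons]
    exact (isSignedPerm_sB hL.1).mul (ih hL.2)

lemma wordProd_pos {L : List ℕ} (hL : ∀ a ∈ L, 0 < a) {x : ℤ} (hx : 0 < x) :
    0 < wordProd L x := by
  induction L with
  | nil => exact hx
  | cons a L ih =>
    obtain ⟨_, hL⟩ := List.forall_mem_cons.mp hL
    have hpos := ih hL
    rw [wordProd_cons, Equiv.Perm.mul_apply, sB_apply, lowEnd]
    split_ifs <;> omega

lemma wordProd_apply_of_lt {L : List ℕ} {x : ℕ} (hx : 0 < x) (hL : ∀ a ∈ L, x < a) :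
    wordProd L x = x := by
  induction L with
  | nil => rfl
  | cons a L ih =>
    obtain ⟨_, hL⟩ := List.forall_mem_cons.mp hL
    rw [wordProd_cons, Equiv.Perm.mul_apply, ih hL, sB_apply, lowEnd]
    split_ifs <;> omega

/-- The positive roots of `B_n`: the pair `(i, j)` stands for `e_j - e_i`, where `e_{-k} = -e_k`.
Each root `e_j + e_i` with `0 < i < j` is represented by `(-i, j)` and not by `(-j, i)`; the
root `e_j` is represented by `(-j, j)`. -/
noncomputable def rootPairs (n : ℕ) : Finset (ℤ × ℤ) :=
  {p ∈ Finset.Icc (-(n : ℤ)) n ×ˢ Finset.Icc 1 (n : ℤ) | -p.2 ≤ p.1 ∧ p.1 < p.2 ∧ p.1 ≠ 0}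

lemma mem_rootPairs {n : ℕ} {p : ℤ × ℤ} :
    p ∈ rootPairs n ↔ 1 ≤ p.2 ∧ p.2 ≤ n ∧ -p.2 ≤ p.1 ∧ p.1 < p.2 ∧ p.1 ≠ 0 := by
  simp only [rootPairs, Finset.mem_filter, Finset.mem_product, Finset.mem_Icc]
  omega

/-- The inversions of `w ∈ W(B_n)`: the positive roots that `w` makes negative. As pairs, these are
the elements of `InvSet n w⁻¹`. -/
noncomputable def inversions (n : ℕ) (w : Equiv.Perm ℤ) : Finset (ℤ × ℤ) :=
  {p ∈ rootPairs n | w p.2 < w p.1}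

lemma mem_inversions {n : ℕ} {w : Equiv.Perm ℤ} {p : ℤ × ℤ} :
    p ∈ inversions n w ↔ p ∈ rootPairs n ∧ w p.2 < w p.1 :=
  Finset.mem_filter

lemma inversions_one (n : ℕ) : inversions n 1 = ∅ :=
  Finset.filter_eq_empty_iff.mpr fun _ hp => (mem_rootPairs.mp hp).2.2.2.1.not_gt

/-- The pair `(lowEnd a, a + 1)` of the simple root `α_a`. -/
def simplePair (a : ℕ) : ℤ × ℤ := (lowEnd a, a + 1)

lemma simplePair_mem_rootPairs {n a : ℕ} (ha : a < n) : simplePair a ∈ rootPairs n := by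
  simp only [mem_rootPairs, simplePair, lowEnd]
  split_ifs <;> omega

/-- The action of `s_a` on the positive roots other than `α_a`, in terms of pairs. The pair
`(-a, a + 1)` is fixed, since its image `(-(a + 1), a)` is the other pair of the same root. -/
def reflectPair (a : ℕ) (p : ℤ × ℤ) : ℤ × ℤ :=
  if p = (-(a : ℤ), (a : ℤ) + 1) then p else (sB a p.1, sB a p.2)

lemma reflectPair_mem_rootPairs {n a : ℕ} (ha : a < n) {p : ℤ × ℤ} (hp : p ∈ rootPairs n)
    (hpa : p ≠ simplePair a) : reflectPair a p ∈ rootPairs n := by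
  obtain ⟨i, j⟩ := p
  simp only [mem_rootPairs, simplePair, ne_eq, Prod.mk.injEq] at hp hpa
  simp only [reflectPair, Prod.mk.injEq]
  split_ifs with hfix
  · exact mem_rootPairs.mpr hp
  · simp only [mem_rootPairs, sB_apply]
    unfold lowEnd at hpa ⊢
    split_ifs <;> omega

lemma reflectPair_ne_simplePair {n a : ℕ} {p : ℤ × ℤ} (hp : p ∈ rootPairs n) :
    reflectPair a p ≠ simplePair a := by
  obtain ⟨i, j⟩ := p
  simp only [mem_rootPairs] at hp
  simp only [reflectPair, simplePair, Prod.mk.injEq, ne_eq]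
  split_ifs with hfix
  · simp only [Prod.mk.injEq, lowEnd]
    split_ifs <;> omega
  · rw [Prod.mk.injEq]
    rintro ⟨hi, hj⟩
    have hi' : i = a + 1 := by rw [← sB_sB a i, hi, sB_lowEnd]
    have hj' : j = lowEnd a := by rw [← sB_sB a j, hj, sB_succ]
    have := lowEnd_lt_succ a
    omega

lemma reflectPair_reflectPair {n a : ℕ} {p : ℤ × ℤ} (hp : p ∈ rootPairs n) :
    reflectPair a (reflectPair a p) = p := by
  obtain ⟨i, j⟩ := p
  simp only [mem_rootPairs] at hp
  by_cases hfix : (i, j) = (-(a : ℤ), (a : ℤ) + 1)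
  · simp only [reflectPair, if_pos hfix]
  · have himage : (sB a i, sB a j) ≠ (-(a : ℤ), (a : ℤ) + 1) := by
      simp only [ne_eq, Prod.mk.injEq, sB_apply, lowEnd] at hfix ⊢
      split_ifs <;> omega
    simp only [reflectPair, if_neg hfix, if_neg himage, sB_sB]

lemma reflectPair_mem_inversions_mul_sB {n a : ℕ} (ha : a < n) {w : Equiv.Perm ℤ}
    (hw : Function.Odd w) {p : ℤ × ℤ} (hp : p ∈ inversions n w) (hpa : p ≠ simplePair a) :
    reflectPair a p ∈ inversions n (w * sB a) := by
  rw [mem_inversions] at hp ⊢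
  refine ⟨reflectPair_mem_rootPairs ha hp.1 hpa, ?_⟩
  rw [reflectPair]
  split_ifs with hfix
  · subst hfix
    have hlow : lowEnd a = a := if_neg (by simpa using (mem_rootPairs.mp hp.1).2.2.2.2)
    have hsucc := sB_lowEnd a
    rw [hlow] at hsucc
    simp only [Equiv.Perm.mul_apply, sB_succ, hlow, odd_sB a _, hsucc]
    rw [hw]
    simpa only [hw (a : ℤ), lt_neg] using hp.2
  · simpa only [Equiv.Perm.mul_apply, sB_sB] using hp.2

lemma card_inversions_mul_sB_of_lt {n a : ℕ} (ha : a < n) {w : Equiv.Perm ℤ}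
    (hw : Function.Odd w) (h : w (lowEnd a) < w (a + 1)) :
    (inversions n (w * sB a)).card = (inversions n w).card + 1 := by
  have hws : Function.Odd (w * sB a) := hw.comp_odd (odd_sB a)
  have hmem : simplePair a ∈ inversions n (w * sB a) := by
    refine mem_inversions.mpr ⟨simplePair_mem_rootPairs ha, ?_⟩
    simpa only [simplePair, Equiv.Perm.mul_apply, sB_succ, sB_lowEnd] using h
  have hnmem {p : ℤ × ℤ} (hp : p ∈ inversions n w) : p ≠ simplePair a := by
    rintro rfl
    exact h.not_gt (mem_inversions.mp hp).2
  rw [← Finset.card_erase_add_one hmem]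
  congr 1
  refine Finset.card_nbij' (reflectPair a) (reflectPair a) (fun p hp => ?_) (fun p hp => ?_)
    (fun p hp => ?_) (fun p hp => ?_)
  · obtain ⟨hpa, hp⟩ := Finset.mem_erase.mp hp
    simpa only [Finset.mem_coe, mul_assoc, sB_mul_self, mul_one] using
      reflectPair_mem_inversions_mul_sB ha hws hp hpa
  · exact Finset.mem_erase.mpr ⟨reflectPair_ne_simplePair (mem_inversions.mp hp).1,
      reflectPair_mem_inversions_mul_sB ha hw hp (hnmem hp)⟩
  · exact reflectPair_reflectPair (mem_inversions.mp (Finset.mem_of_mem_erase hp)).1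
  · exact reflectPair_reflectPair (mem_inversions.mp hp).1

lemma card_inversions_mul_sB_of_gt {n a : ℕ} (ha : a < n) {w : Equiv.Perm ℤ}
    (hw : Function.Odd w) (h : w (a + 1) < w (lowEnd a)) :
    (inversions n (w * sB a)).card + 1 = (inversions n w).card := by
  have hws : Function.Odd (w * sB a) := hw.comp_odd (odd_sB a)
  have hasc : (w * sB a) (lowEnd a) < (w * sB a) (a + 1) := by
    simpa only [Equiv.Perm.mul_apply, sB_succ, sB_lowEnd] using h
  simpa only [mul_assoc, sB_mul_self, mul_one] using
    (card_inversions_mul_sB_of_lt ha hws hasc).symm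

lemma card_inversions_mul_sB_le {n a : ℕ} (ha : a < n) {w : Equiv.Perm ℤ}
    (hw : Function.Odd w) : (inversions n (w * sB a)).card ≤ (inversions n w).card + 1 := by
  rcases lt_or_gt_of_ne (w.injective.ne (lowEnd_lt_succ a).ne) with h | h
  · exact (card_inversions_mul_sB_of_lt ha hw h).le
  · have := card_inversions_mul_sB_of_gt ha hw h
    omega

lemma card_inversions_wordProd_le {n : ℕ} {L : List ℕ} (hL : ∀ a ∈ L, a < n) :
    (inversions n (wordProd L)).card ≤ L.length := by
  induction L using List.reverseRecOn with
  | nil => rw [wordProd_nil, inversions_one, Finset.card_empty, List.length_nil]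
  | append_singleton L a ih =>
    rw [List.forall_mem_append, List.forall_mem_singleton] at hL
    rw [wordProd_append, wordProd_singleton, List.length_append, List.length_singleton]
    exact (card_inversions_mul_sB_le hL.2 (odd_wordProd L)).trans
      (Nat.add_le_add_right (ih hL.1) 1)

lemma perm_int_eq_one_of_strictMono {w : Equiv.Perm ℤ} (hmono : StrictMono w) (h0 : w 0 = 0) :
    w = 1 := by
  have hsucc (x : ℤ) : w (x + 1) = w x + 1 :=
    (hmono.orderIsoOfSurjective w w.surjective).map_succ x
  ext x
  induction x using Int.induction_on with
  | zero => exact h0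
  | succ k ih => rw [hsucc, ih]; rfl
  | pred k ih =>
    have := hsucc (-k - 1)
    rw [sub_add_cancel, ih] at this
    exact (sub_eq_of_eq_add this).symm

lemma IsSignedPerm.strictMono {n : ℕ} {w : Equiv.Perm ℤ} (hw : IsSignedPerm n w)
    (h : ∀ a < n, w (lowEnd a) < w (a + 1)) : StrictMono w := by
  have h0 : w 0 = 0 := hw.odd.map_zero
  have hnat (k : ℕ) : w k < w (k + 1) := by
    rcases lt_or_ge k n with hk | hk
    · have hlt := h k hk
      rcases eq_or_ne k 0 with rfl | hk0
      · rw [lowEnd, if_pos rfl, hw.1, Nat.cast_zero, zero_add] at hlt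
        rw [Nat.cast_zero, zero_add, h0]
        omega
      · rwa [lowEnd, if_neg hk0] at hlt
    · rw [hw.apply_of_lt (i := k + 1) (by omega)]
      exact Int.lt_add_one_of_le (hw.apply_le (by omega) le_rfl)
  refine strictMono_int_of_lt_succ fun x => ?_
  rcases le_or_gt 0 x with hx | hx
  · lift x to ℕ using hx
    exact hnat x
  · obtain ⟨k, rfl⟩ : ∃ k : ℕ, x = -(k + 1) := ⟨(-(x + 1)).toNat, by omega⟩
    rw [neg_add, neg_add_cancel_right, ← neg_add, hw.odd, hw.odd]
    exact neg_lt_neg (hnat k)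

lemma IsSignedPerm.exists_descent {n : ℕ} {w : Equiv.Perm ℤ} (hw : IsSignedPerm n w)
    (hne : w ≠ 1) : ∃ a < n, w (a + 1) < w (lowEnd a) := by
  by_contra! h
  exact hne <| perm_int_eq_one_of_strictMono
    (hw.strictMono fun a ha => (h a ha).lt_of_ne (w.injective.ne (lowEnd_lt_succ a).ne))
    hw.odd.map_zero

lemma IsSignedPerm.exists_wordProd_eq {n : ℕ} {w : Equiv.Perm ℤ} (hw : IsSignedPerm n w) :
    ∃ L : List ℕ, (∀ a ∈ L, a < n) ∧ wordProd L = w ∧ L.length = (inversions n w).card := by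
  by_cases hne : w = 1
  · exact ⟨[], by simp, by rw [hne, wordProd_nil], by rw [hne, inversions_one]; rfl⟩
  obtain ⟨a, ha, hdesc⟩ := hw.exists_descent hne
  have hcard := card_inversions_mul_sB_of_gt ha hw.odd hdesc
  obtain ⟨L, hL, hprod, hlen⟩ := (hw.mul (isSignedPerm_sB ha)).exists_wordProd_eq
  refine ⟨L ++ [a], ?_, ?_, ?_⟩
  · rw [List.forall_mem_append, List.forall_mem_singleton]
    exact ⟨hL, ha⟩
  · rw [wordProd_append, hprod, wordProd_singleton, mul_assoc, sB_mul_self, mul_one]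
  · rw [List.length_append, List.length_singleton, hlen, hcard]
termination_by (inversions n w).card

lemma lengthB_wordProd_le {n : ℕ} {L : List ℕ} (hL : ∀ a ∈ L, a < n) :
    lengthB n (wordProd L) ≤ L.length :=
  Nat.sInf_le ⟨L, hL, rfl, rfl⟩

lemma IsSignedPerm.exists_isReducedWord {n : ℕ} {w : Equiv.Perm ℤ} (hw : IsSignedPerm n w) :
    ∃ L, IsReducedWord n w L := by
  obtain ⟨L, hL, hprod, -⟩ := hw.exists_wordProd_eq
  exact Nat.sInf_mem (s := {m | ∃ L : List ℕ, (∀ a ∈ L, a < n) ∧ wordProd L = w ∧ L.length = m})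
    ⟨_, L, hL, hprod, rfl⟩

lemma lengthB_eq_card_inversions {n : ℕ} {w : Equiv.Perm ℤ} (hw : IsSignedPerm n w) :
    lengthB n w = (inversions n w).card := by
  apply le_antisymm
  · obtain ⟨L, hL, rfl, hlen⟩ := hw.exists_wordProd_eq
    exact hlen ▸ lengthB_wordProd_le hL
  · obtain ⟨L, hL, rfl, hlen⟩ := hw.exists_isReducedWord
    exact hlen ▸ card_inversions_wordProd_le hL

lemma lengthB_mul_le {n : ℕ} {u v : Equiv.Perm ℤ} (hu : IsSignedPerm n u)
    (hv : IsSignedPerm n v) : lengthB n (u * v) ≤ lengthB n u + lengthB n v := by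
  obtain ⟨L, hL, rfl, hLlen⟩ := hu.exists_isReducedWord
  obtain ⟨M, hM, rfl, hMlen⟩ := hv.exists_isReducedWord
  rw [← hLlen, ← hMlen, ← wordProd_append, ← List.length_append]
  exact lengthB_wordProd_le (List.forall_mem_append.mpr ⟨hL, hM⟩)

lemma isReducedWord_of_lengthB_add_length {n : ℕ} {w : Equiv.Perm ℤ} (hw : IsSignedPerm n w)
    {L : List ℕ} (hL : ∀ a ∈ L, a < n)
    (h : lengthB n (w * wordProd L.reverse) + L.length = lengthB n w) :
    IsReducedWord n (wordProd L) L := by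
  have hLrev : ∀ a ∈ L.reverse, a < n := fun a ha => hL a (List.mem_reverse.mp ha)
  have hmul := lengthB_mul_le (hw.mul (isSignedPerm_wordProd hLrev)) (isSignedPerm_wordProd hL)
  rw [wordProd_reverse, inv_mul_cancel_right, ← wordProd_reverse] at hmul
  exact ⟨hL, rfl, le_antisymm (by omega) (lengthB_wordProd_le hL)⟩

/-- The word that performs `m` insertions: for `k = 0, …, m - 1` in turn, right multiplication by
the `k`-th factor moves the value at position `r + k + 1` by `ν k` places to the left. -/
def insertionWord (r : ℕ) (ν : ℕ → ℕ) (m : ℕ) : List ℕ :=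
  (List.range m).flatMap fun k => (List.range' (r + k - ν k + 1) (ν k)).reverse

lemma insertionWord_succ (r : ℕ) (ν : ℕ → ℕ) (m : ℕ) :
    insertionWord r ν (m + 1) =
      insertionWord r ν m ++ (List.range' (r + m - ν m + 1) (ν m)).reverse := by
  rw [insertionWord, List.range_succ, List.flatMap_append, List.flatMap_singleton, insertionWord]

lemma mem_insertionWord {r : ℕ} {ν : ℕ → ℕ} {m a : ℕ} :
    a ∈ insertionWord r ν m ↔ ∃ k < m, r + k - ν k + 1 ≤ a ∧ a < r + k - ν k + 1 + ν k := by
  simp only [insertionWord, List.mem_flatMap, List.mem_range, List.mem_reverse, List.mem_range'_1]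

lemma pos_of_mem_insertionWord {r : ℕ} {ν : ℕ → ℕ} {m a : ℕ} (ha : a ∈ insertionWord r ν m) :
    0 < a := by
  obtain ⟨k, -, hk, -⟩ := mem_insertionWord.mp ha
  omega

lemma lt_of_mem_insertionWord {r : ℕ} {ν : ℕ → ℕ} {m a : ℕ} (hν : ∀ k < m, ν k ≤ r + k)
    (ha : a ∈ insertionWord r ν m) : a < r + m := by
  obtain ⟨k, hkm, -, hk⟩ := mem_insertionWord.mp ha
  have := hν k hkm
  omega

lemma wordProd_range'_reverse_apply_self {b : ℕ} (hb : 0 < b) (m : ℕ) :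
    wordProd (List.range' b m).reverse b = b + m := by
  induction m generalizing b with
  | zero => exact (add_zero _).symm
  | succ m ih =>
    have hsucc : sB b b = (b + 1 : ℕ) := by
      rw [sB_apply, lowEnd, if_neg hb.ne']
      split_ifs <;> omega
    rw [List.range'_succ, List.reverse_cons, wordProd_append, wordProd_singleton,
      Equiv.Perm.mul_apply, hsucc, ih b.succ_pos]
    push_cast
    ring

lemma card_inversions_mul_range'_reverse {n b : ℕ} (hb : 0 < b) {m : ℕ} (hbm : b + m ≤ n)
    {w : Equiv.Perm ℤ} (hw : Function.Odd w)
    (hmin : ∀ p : ℤ, b ≤ p → p < b + m → w (b + m) < w p) :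
    (inversions n (w * wordProd (List.range' b m).reverse)).card + m = (inversions n w).card := by
  induction m generalizing b with
  | zero => rfl
  | succ m ih =>
    rw [Nat.cast_succ, add_comm (m : ℤ), ← add_assoc] at hmin
    have hrest := ih b.succ_pos (by omega) fun p hp hpm => by
      rw [Nat.cast_succ] at hp hpm ⊢
      exact hmin p (by omega) hpm
    rw [List.range'_succ, List.reverse_cons, wordProd_append, wordProd_singleton, ← mul_assoc]
    set u := w * wordProd (List.range' (b + 1) m).reverse
    have hu_succ : u (b + 1) = w (b + 1 + m) := by
      have hself := wordProd_range'_reverse_apply_self b.succ_pos m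
      rw [Nat.cast_succ] at hself
      rw [Equiv.Perm.mul_apply, hself]
    have hu_low : u (lowEnd b) = w b := by
      rw [lowEnd, if_neg hb.ne', Equiv.Perm.mul_apply, wordProd_apply_of_lt hb]
      intro a ha
      rw [List.mem_reverse, List.mem_range'_1] at ha
      omega
    have hu : Function.Odd u := hw.comp_odd (odd_wordProd _)
    have hdesc : u (b + 1) < u (lowEnd b) := by
      rw [hu_succ, hu_low]
      exact hmin b le_rfl (by omega)
    have hstep := card_inversions_mul_sB_of_gt (by omega : b < n) hu hdesc
    omega

/-- Each value to be inserted is smaller than all values before it, so every letter of the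
insertion word destroys an inversion. -/
lemma card_inversions_mul_insertionWord {n r : ℕ} {ν : ℕ → ℕ} {m : ℕ} (hmn : r + m ≤ n)
    (hν : ∀ k < m, ν k ≤ r + k) {w : Equiv.Perm ℤ} (hw : Function.Odd w)
    (hmin : ∀ k < m, ∀ p : ℤ, 0 < p → p ≤ r + k → w (r + k + 1) < w p) :
    (inversions n (w * wordProd (insertionWord r ν m))).card + (insertionWord r ν m).length =
      (inversions n w).card := by
  induction m with
  | zero => rfl
  | succ m ih =>
    have ih := ih (by omega) (fun k hk => hν k (by omega)) (fun k hk => hmin k (by omega))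
    have hνm := hν m m.lt_succ_self
    rw [insertionWord_succ, wordProd_append, ← mul_assoc, List.length_append, List.length_reverse,
      List.length_range']
    set v := wordProd (insertionWord r ν m)
    have hv : IsSignedPerm (r + m) v := isSignedPerm_wordProd fun a ha =>
      lt_of_mem_insertionWord (fun k hk => hν k (by omega)) ha
    have hwv : Function.Odd (w * v) := hw.comp_odd hv.odd
    have hv_last : v (r + m + 1) = r + m + 1 := hv.apply_of_lt (by omega)
    have hlast (p : ℤ) (hp : 0 < p) (hpm : p ≤ r + m) : (w * v) (r + m + 1) < (w * v) p := by
      rw [Equiv.Perm.mul_apply, Equiv.Perm.mul_apply, hv_last]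
      exact hmin m m.lt_succ_self _ (wordProd_pos (fun _ => pos_of_mem_insertionWord) hp)
        (hv.apply_le (by omega) hpm)
    have hstart : ((r + m - ν m + 1 : ℕ) : ℤ) + ν m = r + m + 1 := by omega
    have hrun := card_inversions_mul_range'_reverse (n := n) (b := r + m - ν m + 1) (m := ν m)
      (by omega) (by omega) hwv fun p hp hpm => by
        rw [hstart] at hpm ⊢
        exact hlast p (by omega) (by omega)
    omega

lemma IsWdr.apply_lt_apply {d r : ℕ} {w : Equiv.Perm ℤ} (hw : IsWdr d r w) {i j : ℤ}
    (hi : 0 < i) (hij : i < j) (hrj : r < j) (hj : j ≤ d + r) : w j < w i := by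
  obtain ⟨-, hsmall, hlarge⟩ := hw
  rw [hlarge j hrj hj]
  rcases le_or_gt i r with hir | hir
  · rw [hsmall i hi hir]
    omega
  · rw [hlarge i hir (by omega)]
    omega

lemma mem_inversions_of_isWdr {d r : ℕ} {w : Equiv.Perm ℤ} (hw : IsWdr d r w) {p : ℤ × ℤ} :
    p ∈ inversions (d + r) w ↔ (r < p.2 ∧ p.2 ≤ d + r) ∧
      (-p.2 ≤ p.1 ∧ p.1 < -r ∨ 1 ≤ p.1 ∧ p.1 < p.2) := by
  obtain ⟨i, j⟩ := p
  have hsmall := hw.2.1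
  have hlarge := hw.2.2
  have hodd (k : ℤ) : w k = -w (-k) := by rw [hw.1.odd, neg_neg]
  rw [mem_inversions, mem_rootPairs]
  push_cast
  constructor
  · rintro ⟨⟨hj, hjn, hji, hij, hi⟩, hlt⟩
    have hrj : r < j := by
      by_contra! hjr
      rw [hsmall j hj hjr] at hlt
      rcases hi.lt_or_gt with hi | hi
      · rw [hodd, hsmall (-i) (by omega) (by omega)] at hlt
        omega
      · rw [hsmall i hi (by omega)] at hlt
        omega
    refine ⟨⟨hrj, hjn⟩, ?_⟩
    by_contra! hmid
    rw [hlarge j hrj hjn, hodd i, hsmall (-i) (by omega) (by omega)] at hlt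
    omega
  · rintro ⟨⟨hrj, hjn⟩, ⟨hji, hir⟩ | ⟨hi, hij⟩⟩
    · refine ⟨by omega, ?_⟩
      rw [hlarge j hrj hjn, hodd, hlarge (-i) (by omega) (by omega)]
      omega
    · exact ⟨by omega, hw.apply_lt_apply hi hij hrj hjn⟩

lemma card_inversions_of_isWdr {d r : ℕ} {w : Equiv.Perm ℤ} (hw : IsWdr d r w) :
    (inversions (d + r) w).card = sizeP d (Zlam d r) := by
  have hrow : Set.MapsTo (fun p : ℤ × ℤ => ((d : ℤ) + r + 1 - p.2).toNat) (inversions (d + r) w)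
      (Finset.Icc 1 d) := fun p hp => by
    have := (mem_inversions_of_isWdr hw).mp hp
    simp only [Finset.coe_Icc, Set.mem_Icc]
    omega
  rw [Finset.card_eq_sum_card_fiberwise hrow, sizeP]
  refine Finset.sum_congr rfl fun i hi => ?_
  rw [Finset.mem_Icc] at hi
  obtain ⟨j, hj⟩ : ∃ j : ℤ, j = d + r + 1 - i := ⟨_, rfl⟩
  have hfiber : {p ∈ inversions (d + r) w | ((d : ℤ) + r + 1 - p.2).toNat = i} =
      (Finset.Ico (-j) (-r) ∪ Finset.Ico 1 j) ×ˢ {j} := by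
    ext p
    simp only [Finset.mem_filter, mem_inversions_of_isWdr hw, Finset.mem_product,
      Finset.mem_union, Finset.mem_Ico, Finset.mem_singleton]
    omega
  have hdisj : Disjoint (Finset.Ico (-j) (-r)) (Finset.Ico 1 j) :=
    Finset.disjoint_left.mpr fun x hx hx' => by
      rw [Finset.mem_Ico] at hx hx'
      omega
  rw [hfiber, Finset.card_product, Finset.card_singleton, mul_one,
    Finset.card_union_of_disjoint hdisj, Int.card_Ico, Int.card_Ico, Zlam]
  omega

lemma IsStrictPartition.lt_add {d : ℕ} {lam : ℕ → ℕ} (hlam : IsStrictPartition d lam) {i : ℕ}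
    (hi : 1 ≤ i) (hid : i ≤ d) : d < lam i + i := by
  induction hid using Nat.decreasingInduction with
  | self => have := hlam.2; omega
  | of_succ k hk ih =>
    have := hlam.1 k hi hk
    have := ih (by omega)
    omega

lemma aLamWord_reverse (d r : ℕ) (lam : ℕ → ℕ) :
    (aLamWord d r lam).reverse = insertionWord r (fun k => muF d r lam (d - k)) d := by
  rw [aLamWord, List.reverse_flatMap, List.range_eq_range', List.reverse_range', List.flatMap_map,
    insertionWord]
  refine List.flatMap_congr fun k hk => ?_
  rw [List.mem_range] at hk
  have hrow : 0 + d - 1 - k + 1 = d - k := by omega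
  have hstart : d + r - (d - k) = r + k := by omega
  rw [Function.comp_apply, hrow, hstart, List.range'_eq_map_range]

lemma length_aLamWord (d r : ℕ) (lam : ℕ → ℕ) :
    (aLamWord d r lam).length = sigmaF d r lam d := by
  have hsum : (aLamWord d r lam).length = ∑ k ∈ Finset.range d, muF d r lam (k + 1) := by
    simp only [aLamWord, List.length_flatMap, List.length_map, List.length_range]
    rfl
  rw [hsum, sigmaF, Finset.range_eq_Ico, Finset.sum_Ico_add' (muF d r lam) 0 d 1]
  rfl

lemma sizeP_add_sigmaF {d r : ℕ} {lam : ℕ → ℕ}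
    (hsub : ∀ i : ℕ, 1 ≤ i → i ≤ d → lam i ≤ Zlam d r i) :
    sizeP d lam + sigmaF d r lam d = sizeP d (Zlam d r) := by
  rw [sizeP, sigmaF, ← Finset.sum_add_distrib]
  refine Finset.sum_congr rfl fun i hi => ?_
  rw [Finset.mem_Icc] at hi
  exact Nat.add_sub_of_le (hsub i hi.1 hi.2)

theorem aLam_reduced_and_length_general (d r : ℕ) (lam : ℕ → ℕ)
    (hstair : ∀ i : ℕ, 1 ≤ i → i ≤ d → d < lam i + i)
    (hsub : ∀ i : ℕ, 1 ≤ i → i ≤ d → lam i ≤ Zlam d r i)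
    (w : Equiv.Perm ℤ) (hw : IsWdr d r w) :
    IsReducedWord (d + r) ((w * wordProd (aLamWord d r lam).reverse)⁻¹ * w)
        (aLamWord d r lam) ∧
      lengthB (d + r) (w * wordProd (aLamWord d r lam).reverse) = sizeP d lam := by
  have hμ : ∀ k < d, muF d r lam (d - k) ≤ r + k := fun k hk => by
    have := hstair (d - k) (by omega) (by omega)
    unfold muF
    omega
  have hletters : ∀ a ∈ aLamWord d r lam, a < d + r := fun a ha => by
    rw [add_comm]
    exact lt_of_mem_insertionWord hμ (aLamWord_reverse d r lam ▸ List.mem_reverse.mpr ha)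
  have hwlam : IsSignedPerm (d + r) (w * wordProd (aLamWord d r lam).reverse) :=
    hw.1.mul (isSignedPerm_wordProd fun a ha => hletters a (List.mem_reverse.mp ha))
  have hdrop : lengthB (d + r) (w * wordProd (aLamWord d r lam).reverse) +
      (aLamWord d r lam).length = lengthB (d + r) w := by
    rw [lengthB_eq_card_inversions hwlam, lengthB_eq_card_inversions hw.1, ← List.length_reverse,
      aLamWord_reverse]
    exact card_inversions_mul_insertionWord (add_comm r d).le hμ hw.1.odd
      fun k hk p hp hpk => hw.apply_lt_apply hp (by omega) (by omega) (by omega)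
  constructor
  · have hquot : (w * wordProd (aLamWord d r lam).reverse)⁻¹ * w = wordProd (aLamWord d r lam) := by
      rw [wordProd_reverse, mul_inv_rev, inv_inv, inv_mul_cancel_right]
    rw [hquot]
    exact isReducedWord_of_lengthB_add_length hw.1 hletters hdrop
  · rw [length_aLamWord, lengthB_eq_card_inversions hw.1, card_inversions_of_isWdr hw,
      ← sizeP_add_sigmaF hsub] at hdrop
    exact Nat.add_right_cancel hdrop

/-- `a^λ` is a reduced word of `(w^λ)⁻¹ w^{(d,r)}`, and
`ℓ(w^λ) = |λ| = N`. -/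
theorem aLam_reduced_and_length (d r : ℕ) (hd : 1 ≤ d)
    (lam : ℕ → ℕ) (hlam : IsStrictPartition d lam)
    (hsub : ∀ i : ℕ, 1 ≤ i → i ≤ d → lam i ≤ Zlam d r i)
    (w : Equiv.Perm ℤ) (hw : IsWdr d r w) :
    IsReducedWord (d + r) ((w * wordProd (aLamWord d r lam).reverse)⁻¹ * w)
        (aLamWord d r lam) ∧
      lengthB (d + r) (w * wordProd (aLamWord d r lam).reverse) = sizeP d lam :=
  aLam_reduced_and_length_general d r lam (fun _ => hlam.lt_add) hsub w hw

end BST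
end
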